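/- As F[H]-modules, F^I is the internal direct sum of Im(φ) and Ker(φ). -/

import Mathlib

/-!
The theorem follows from the identity `A ^ 3 = A` over a field of characteristic two, where `A` is
the incidence matrix: `φ ^ 3 = φ` makes `φ ^ 2` a projection with the same range and kernel as `φ`.

The entry `(A ^ 3) p r` counts walks `p ⊥ s ⊥ t ⊥ r` with `s, t` internal, and only its parity
matters. If `p = r`, the exchange of `s` and `t` pairs off the walks, since no internal point is
perpendicular to itself. If `p ≠ r`, let `c` be the pole of the line `pr`; it is not on the conic,
because tangent lines contain no internal points. The reflection in `c` fixes `p` and `r`, hence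
acts on the walks, and only its fixed walks need counting. The fixed points on `p^⊥` are `c` and
`d = pr ∩ p^⊥`; those on `r^⊥` are `c` and `d' = pr ∩ r^⊥`. The walks `(c, d')` and `(d, c)` cancel
because `Q(d) Q(d')` differs from `Q(p) Q(r)` by a nonzero square, so that `d` and `d'` are
internal together. The walk `(d, d')` exists exactly when `p ⊥ r`, in which case `d = r` and
`d' = p`. Hence the parity is that of `A p r`.

`H`-stability holds because matrices in `H` preserve the polar form of `Q`, hence permute the
internal points and preserve perpendicularity.
-/


open scoped Classical

noncomputable section

namespace ConicPaper

variable (K : Type) [Field K] [Fintype K]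

/-- Points (and also lines, via homogeneous coordinates) of `PG(2,q)`. -/
abbrev Pt := Projectivization K (Fin 3 → K)

instance : Fintype (Pt K) := @Fintype.ofFinite _ (Quotient.finite _)

/-- `a` is a nonsquare in `K`. -/
def Nonsq (a : K) : Prop := ¬ IsSquare a

/-- The quadratic form `Q(x0,x1,x2) = x1^2 - x0*x2` defining the conic. -/
def Qf (v : Fin 3 → K) : K := v 1 ^ 2 - v 0 * v 2

/-- A point is internal when `Q` of (a representative of) it is a nonsquare. -/
def Internal (p : Pt K) : Prop := Nonsq K (Qf K p.rep)

/-- A point is external when `Q` of it is a nonzero square. -/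
def External (p : Pt K) : Prop := Qf K p.rep ≠ 0 ∧ IsSquare (Qf K p.rep)

/-- The point `p` lies on the line `ℓ = [b0,b1,b2]`. -/
def OnL (p ℓ : Pt K) : Prop :=
  p.rep 0 * ℓ.rep 0 + p.rep 1 * ℓ.rep 1 + p.rep 2 * ℓ.rep 2 = 0

/-- Discriminant `b1^2 - 4 b0 b2` of a line. -/
def lineDisc (ℓ : Pt K) : K := ℓ.rep 1 ^ 2 - 4 * ℓ.rep 0 * ℓ.rep 2

/-- A line is a passant when its discriminant is a nonsquare. -/
def Passant (ℓ : Pt K) : Prop := Nonsq K (lineDisc K ℓ)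

/-- A line is a secant when its discriminant is a nonzero square. -/
def Secant (ℓ : Pt K) : Prop := lineDisc K ℓ ≠ 0 ∧ IsSquare (lineDisc K ℓ)

/-- The incidence pairing of the vector `w` with the polar line
`p^⊥ = [z, -2y, x]` of the point `p = (x,y,z)`. -/
def perpDot (p : Pt K) (w : Fin 3 → K) : K :=
  w 0 * p.rep 2 + w 1 * (-2 * p.rep 1) + w 2 * p.rep 0

/-- The point `r` lies on the passant line `p^⊥`. -/
def OnPerp (p r : Pt K) : Prop := perpDot K p r.rep = 0

/-- The (finite) set `I` of internal points, as a type. -/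
abbrev Ipts := {p : Pt K // Internal K p}

instance : Fintype (Ipts K) := Fintype.ofFinite _

/-- The action of a (nonsingular) matrix `M` on points of `PG(2,q)`:
`p ↦ p·M`.  (If `p.rep ᵥ* M` were zero -- impossible for invertible `M` --
we return `p`, making the function total.) -/
def actPt (M : Matrix (Fin 3) (Fin 3) K) (p : Pt K) : Pt K :=
  if h : Matrix.vecMul p.rep M ≠ 0 then Projectivization.mk K (Matrix.vecMul p.rep M) h else p

/-- The group `H ≅ PSL(2,q)`, given by its set of matrix representatives. -/
def Hset : Set (Matrix (Fin 3) (Fin 3) K) :=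
  {M | ∃ a b c d : K, a * d - b * c = 1 ∧
    M = !![a^2, a*b, b^2; 2*a*c, a*d + b*c, 2*b*d; c^2, c*d, d^2]}

/-- An algebraic closure `F` of `F_2`. -/
abbrev F2bar := AlgebraicClosure (ZMod 2)

/-- The incidence matrix `A`, regarded over `F`. -/
def AmatF : Matrix (Ipts K) (Ipts K) F2bar :=
  Matrix.of fun p r => if OnPerp K p.1 r.1 then 1 else 0

/-- The map `φ : F^I → F^I`, `e_p ↦ ∑_{r ∈ I, r on p^⊥} e_r`; its matrix
with respect to the standard basis is `A`. -/
def phi : (Ipts K → F2bar) →ₗ[F2bar] (Ipts K → F2bar) :=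
  Matrix.vecMulLinear (AmatF K)

/-- The permutation matrix (over `F`) of the action of `M ∈ H` on `I`. -/
def actMat (M : Matrix (Fin 3) (Fin 3) K) : Matrix (Ipts K) (Ipts K) F2bar :=
  Matrix.of fun p r => if actPt K M p.1 = r.1 then 1 else 0

/-- The action of `M ∈ H` on `F^I`, extending `e_p ↦ e_{p^M}` linearly. -/
def actF (M : Matrix (Fin 3) (Fin 3) K) :
    (Ipts K → F2bar) →ₗ[F2bar] (Ipts K → F2bar) :=
  Matrix.vecMulLinear (actMat K M)

/-! ### The polar form and internal points -/

section

variable {K}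

set_option linter.unusedSectionVars false

/-- The polar form of `Qf`, so that `Bf v v = 2 * Qf v`. -/
def Bf (v w : Fin 3 → K) : K := 2 * v 1 * w 1 - v 0 * w 2 - v 2 * w 0

lemma Bf_comm (v w : Fin 3 → K) : Bf v w = Bf w v := by unfold Bf; ring

lemma Bf_smul_left (a : K) (v w : Fin 3 → K) : Bf (a • v) w = a * Bf v w := by
  simp only [Bf, Pi.smul_apply, smul_eq_mul]; ring

lemma Bf_smul_right (a : K) (v w : Fin 3 → K) : Bf v (a • w) = a * Bf v w := by
  simp only [Bf, Pi.smul_apply, smul_eq_mul]; ring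

lemma Bf_self (v : Fin 3 → K) : Bf v v = 2 * Qf K v := by unfold Bf Qf; ring

lemma Qf_smul (a : K) (v : Fin 3 → K) : Qf K (a • v) = a ^ 2 * Qf K v := by
  simp only [Qf, Pi.smul_apply, smul_eq_mul]; ring

lemma nonsq_sq_mul {a : K} (ha : a ≠ 0) (b : K) : Nonsq K (a ^ 2 * b) ↔ Nonsq K b := by
  unfold Nonsq
  refine not_congr ⟨?_, ?_⟩
  · rintro ⟨x, hx⟩
    exact ⟨x / a, by field_simp; linear_combination hx⟩
  · rintro ⟨x, rfl⟩
    exact ⟨a * x, by ring⟩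

lemma Nonsq.ne_zero {a : K} (h : Nonsq K a) : a ≠ 0 := by
  rintro rfl; exact h ⟨0, by simp⟩

lemma ne_zero_of_Qf {v : Fin 3 → K} (h : Qf K v ≠ 0) : v ≠ 0 := by
  rintro rfl; exact h (by simp [Qf])

lemma internal_mk {v : Fin 3 → K} (hv : v ≠ 0) :
    Internal K (Projectivization.mk K v hv) ↔ Nonsq K (Qf K v) := by
  obtain ⟨a, ha⟩ := Projectivization.exists_smul_eq_mk_rep K v hv
  unfold Internal
  rw [← ha, Units.smul_def, Qf_smul, nonsq_sq_mul a.ne_zero]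

/-- The internal point represented by a vector with nonsquare `Qf`. -/
def toI (v : Fin 3 → K) (h : Nonsq K (Qf K v)) : Ipts K :=
  ⟨Projectivization.mk K v (ne_zero_of_Qf h.ne_zero), (internal_mk _).2 h⟩

lemma rep_toI (v : Fin 3 → K) (h : Nonsq K (Qf K v)) :
    ∃ a : K, a ≠ 0 ∧ (toI v h).1.rep = a • v := by
  obtain ⟨a, ha⟩ := Projectivization.exists_smul_eq_mk_rep K v (ne_zero_of_Qf h.ne_zero)
  exact ⟨a, a.ne_zero, ha.symm⟩

lemma eq_toI {v : Fin 3 → K} (h : Nonsq K (Qf K v)) {s : Ipts K} {a : K}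
    (hs : s.1.rep = a • v) : s = toI v h := by
  apply Subtype.ext
  rw [← s.1.mk_rep]
  exact (Projectivization.mk_eq_mk_iff' K _ _ _ _).2 ⟨a, hs.symm⟩

lemma nonsq_of_rep {v : Fin 3 → K} {s : Ipts K} {a : K} (hs : s.1.rep = a • v) :
    Nonsq K (Qf K v) := by
  have h : Nonsq K (Qf K s.1.rep) := s.2
  have ha : a ≠ 0 := by
    rintro rfl
    exact s.1.rep_nonzero (by simpa using hs)
  rwa [hs, Qf_smul, nonsq_sq_mul ha] at h

lemma Ipts_ext {s t : Ipts K} {a : K} (h : s.1.rep = a • t.1.rep) : s = t := by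
  apply Subtype.ext
  rw [← s.1.mk_rep, ← t.1.mk_rep]
  exact (Projectivization.mk_eq_mk_iff' K _ _ _ _).2 ⟨a, h.symm⟩

/-- Perpendicularity of internal points. -/
def Perp (p r : Ipts K) : Prop := Bf p.1.rep r.1.rep = 0

lemma perp_comm {p r : Ipts K} : Perp p r ↔ Perp r p := by unfold Perp; rw [Bf_comm]

lemma onPerp_iff (p r : Ipts K) : OnPerp K p.1 r.1 ↔ Perp p r := by
  unfold OnPerp Perp
  rw [show perpDot K p.1 r.1.rep = -Bf p.1.rep r.1.rep by unfold perpDot Bf; ring, neg_eq_zero]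

lemma perp_toI (s : Ipts K) (v : Fin 3 → K) (h : Nonsq K (Qf K v)) :
    Perp s (toI v h) ↔ Bf s.1.rep v = 0 := by
  obtain ⟨a, ha, e⟩ := rep_toI v h
  unfold Perp
  rw [e, Bf_smul_right]; simp [ha]

lemma not_perp_self (h2 : (2 : K) ≠ 0) (p : Ipts K) : ¬ Perp p p := by
  unfold Perp
  rw [Bf_self]
  exact mul_ne_zero h2 (Nonsq.ne_zero p.2)

/-- The polar line of an internal point misses the conic. -/
lemma anisotropic {p w : Fin 3 → K} (hp : Nonsq K (Qf K p)) (hpw : Bf p w = 0)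
    (hw : Qf K w = 0) : w = 0 := by
  unfold Bf at hpw
  unfold Qf at hw
  have hx : p 0 ≠ 0 := by
    intro h
    exact hp ⟨p 1, by simp only [Qf, h]; ring⟩
  have h0 : w 0 = 0 := by
    by_contra h0
    -- Eliminating `w 2` exhibits `Qf p` as the square of `(p 0 * w 1 - w 0 * p 1) / w 0`.
    refine hp ⟨(p 0 * w 1 - w 0 * p 1) / w 0, ?_⟩
    unfold Qf
    field_simp
    linear_combination (-p 0 ^ 2) * hw + (p 0 * w 0) * hpw
  have h1 : w 1 = 0 := by
    rw [h0] at hw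
    simpa using hw
  have h2 : w 2 = 0 := by
    rw [h0, h1] at hpw
    simpa [hx] using hpw
  ext i
  fin_cases i <;> assumption

/-! ### Similitudes -/

/-- A linear map multiplying the polar form by a nonzero square `k ^ 2`. -/
def IsSim (f : (Fin 3 → K) →ₗ[K] (Fin 3 → K)) : Prop :=
  ∃ k : K, k ≠ 0 ∧ ∀ v w, Bf (f v) (f w) = k ^ 2 * Bf v w

lemma IsSim.nonsq (h2 : (2 : K) ≠ 0) {f : (Fin 3 → K) →ₗ[K] (Fin 3 → K)} (hf : IsSim f)
    {v : Fin 3 → K} (hv : Nonsq K (Qf K v)) : Nonsq K (Qf K (f v)) := by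
  obtain ⟨k, hk, h⟩ := hf
  have e : Qf K (f v) = k ^ 2 * Qf K v := by
    apply mul_left_cancel₀ h2
    rw [← Bf_self, h, Bf_self]; ring
  rwa [e, nonsq_sq_mul hk]

lemma IsSim.eq_zero (h2 : (2 : K) ≠ 0) {f : (Fin 3 → K) →ₗ[K] (Fin 3 → K)} (hf : IsSim f)
    {v : Fin 3 → K} (hv : f v = 0) : v = 0 := by
  obtain ⟨k, hk, h⟩ := hf
  have hB : ∀ w, Bf v w = 0 := fun w => by
    have := h v w
    rw [hv] at this
    have h0 : Bf (0 : Fin 3 → K) (f w) = 0 := by simp [Bf]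
    rw [h0] at this
    simpa [hk] using this.symm
  have e0 := hB ![1, 0, 0]
  have e1 := hB ![0, 1, 0]
  have e2 := hB ![0, 0, 1]
  simp [Bf, h2] at e0 e1 e2
  ext i
  fin_cases i <;> assumption

/-- The map on internal points induced by a similitude. -/
def simI (h2 : (2 : K) ≠ 0) (f : (Fin 3 → K) →ₗ[K] (Fin 3 → K)) (hf : IsSim f)
    (p : Ipts K) : Ipts K :=
  toI (f p.1.rep) (hf.nonsq h2 p.2)

section
variable (h2 : (2 : K) ≠ 0) (f : (Fin 3 → K) →ₗ[K] (Fin 3 → K)) (hf : IsSim f)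

lemma simI_perp (p r : Ipts K) : Perp (simI h2 f hf p) (simI h2 f hf r) ↔ Perp p r := by
  obtain ⟨a, ha, e⟩ := rep_toI (f p.1.rep) (hf.nonsq h2 p.2)
  obtain ⟨b, hb, e'⟩ := rep_toI (f r.1.rep) (hf.nonsq h2 r.2)
  obtain ⟨k, hk, h⟩ := hf
  unfold Perp simI
  rw [e, e', Bf_smul_left, Bf_smul_right, h]
  simp [ha, hb, hk]

lemma simI_injective : Function.Injective (simI h2 f hf) := by
  intro p r h
  obtain ⟨a, ha, e⟩ := rep_toI (f p.1.rep) (hf.nonsq h2 p.2)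
  obtain ⟨b, hb, e'⟩ := rep_toI (f r.1.rep) (hf.nonsq h2 r.2)
  change toI _ _ = toI _ _ at h
  rw [h, e'] at e
  have : f (a • p.1.rep - b • r.1.rep) = 0 := by
    rw [map_sub, map_smul, map_smul, e, sub_self]
  have := sub_eq_zero.1 (hf.eq_zero h2 this)
  refine Ipts_ext (a := a⁻¹ * b) ?_
  rw [mul_smul, ← this, smul_smul, inv_mul_cancel₀ ha, one_smul]

end

/-! ### Reflections -/

/-- The reflection in `c`, scaled by `Bf c c` so as to be polynomial in `c`. -/
def refl (c : Fin 3 → K) : (Fin 3 → K) →ₗ[K] (Fin 3 → K) where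
  toFun v := Bf c c • v - (2 * Bf v c) • c
  map_add' v w := by
    ext i; simp only [Bf, Pi.add_apply, Pi.sub_apply, Pi.smul_apply, smul_eq_mul]; ring
  map_smul' a v := by
    ext i
    simp only [Bf, Pi.sub_apply, Pi.smul_apply, smul_eq_mul, RingHom.id_apply]; ring

lemma refl_apply (c v : Fin 3 → K) : refl c v = Bf c c • v - (2 * Bf v c) • c := rfl

lemma refl_isSim {c : Fin 3 → K} (hc : Bf c c ≠ 0) : IsSim (refl c) := by
  refine ⟨Bf c c, hc, fun v w => ?_⟩
  simp only [refl_apply, Bf, Pi.sub_apply, Pi.smul_apply, smul_eq_mul]; ring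

lemma refl_refl (c v : Fin 3 → K) : refl c (refl c v) = (Bf c c ^ 2) • v := by
  ext i
  simp only [refl_apply, Bf, Pi.sub_apply, Pi.smul_apply, smul_eq_mul]; ring

section
variable (h2 : (2 : K) ≠ 0) {c : Fin 3 → K} (hc : Bf c c ≠ 0)

/-- The reflection in `c` as a map on internal points. -/
def reflI (s : Ipts K) : Ipts K := simI h2 (refl c) (refl_isSim hc) s

lemma reflI_reflI (s : Ipts K) : reflI h2 hc (reflI h2 hc s) = s := by
  obtain ⟨a, ha, e⟩ := rep_toI (refl c s.1.rep) ((refl_isSim hc).nonsq h2 s.2)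
  symm
  refine eq_toI (a := (a * Bf c c ^ 2)⁻¹) ((refl_isSim hc).nonsq h2 (reflI h2 hc s).2) ?_
  change (reflI h2 hc s).1.rep = _ at e
  rw [e, map_smul, refl_refl, smul_smul, smul_smul, mul_assoc, inv_mul_cancel₀, one_smul]
  exact mul_ne_zero ha (pow_ne_zero 2 hc)

lemma reflI_eq_of_perp {s : Ipts K} (h : Bf s.1.rep c = 0) : reflI h2 hc s = s := by
  symm
  refine eq_toI (a := (Bf c c)⁻¹) ((refl_isSim hc).nonsq h2 s.2) ?_
  rw [refl_apply, h]
  simp [smul_smul, inv_mul_cancel₀ hc]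

lemma reflI_eq_of_center {s : Ipts K} {a : K} (h : s.1.rep = a • c) : reflI h2 hc s = s := by
  symm
  refine eq_toI (a := -(Bf c c)⁻¹) ((refl_isSim hc).nonsq h2 s.2) ?_
  rw [refl_apply, h, Bf_smul_left]
  ext i
  simp only [Pi.sub_apply, Pi.smul_apply, smul_eq_mul]
  field_simp
  ring

lemma reflI_fixed {s : Ipts K} (h : reflI h2 hc s = s) :
    Bf s.1.rep c = 0 ∨ ∃ a : K, s.1.rep = a • c := by
  by_cases h0 : Bf s.1.rep c = 0
  · exact Or.inl h0
  right
  obtain ⟨a, ha, e⟩ := rep_toI (refl c s.1.rep) ((refl_isSim hc).nonsq h2 s.2)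
  change reflI h2 hc s = _ at h
  change (reflI h2 hc s).1.rep = _ at e
  rw [h, refl_apply] at e
  -- Pairing `e` with `c` shows that `s` has eigenvalue `-Bf c c` under the reflection.
  have e1 : Bf s.1.rep c = a * -(Bf c c * Bf s.1.rep c) := by
    conv_lhs => rw [e]
    simp only [Bf, Pi.sub_apply, Pi.smul_apply, smul_eq_mul]; ring
  have e2 : a * Bf c c = -1 := by
    apply mul_right_cancel₀ h0
    linear_combination e1
  refine ⟨-(a * Bf s.1.rep c), ?_⟩
  ext i
  have e3 := congrFun e i
  simp only [Pi.sub_apply, Pi.smul_apply, smul_eq_mul] at e3 ⊢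
  apply mul_left_cancel₀ h2
  linear_combination e3 + s.1.rep i * e2

end

/-! ### The polar triangles of a pair of points -/

/-- The pole of the line through `p` and `r`. -/
def pole (p r : Fin 3 → K) : Fin 3 → K :=
  ![2 * (p 0 * r 1 - p 1 * r 0), p 0 * r 2 - p 2 * r 0, 2 * (p 1 * r 2 - p 2 * r 1)]

/-- The Gram determinant of `p` and `r`. -/
def gram (p r : Fin 3 → K) : K := Bf p p * Bf r r - Bf p r ^ 2

/-- The point of the line through `p` and `r` that is perpendicular to `p`. -/
def foot (p r : Fin 3 → K) : Fin 3 → K := Bf p p • r - Bf p r • p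

lemma gram_comm (p r : Fin 3 → K) : gram p r = gram r p := by
  unfold gram; rw [Bf_comm p r]; ring

lemma pole_perp_left (p r : Fin 3 → K) : Bf p (pole p r) = 0 := by
  simp [Bf, pole]; ring

lemma pole_perp_right (p r : Fin 3 → K) : Bf r (pole p r) = 0 := by
  simp [Bf, pole]; ring

lemma pole_self (p r : Fin 3 → K) : Bf (pole p r) (pole p r) = -2 * gram p r := by
  simp [Bf, pole, gram]; ring

lemma foot_perp (p r : Fin 3 → K) : Bf p (foot p r) = 0 := by
  simp [Bf, foot]; ring

lemma foot_perp_pole (p r : Fin 3 → K) : Bf (foot p r) (pole p r) = 0 := by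
  simp [Bf, foot, pole]; ring

lemma foot_perp_pole' (p r : Fin 3 → K) : Bf (foot r p) (pole p r) = 0 := by
  simp [Bf, foot, pole]; ring

lemma Qf_foot (h2 : (2 : K) ≠ 0) (p r : Fin 3 → K) :
    Qf K (foot p r) = Qf K p * gram p r := by
  apply mul_left_cancel₀ h2
  rw [← Bf_self, ← mul_assoc, ← Bf_self]
  simp only [Bf, foot, gram, Pi.sub_apply, Pi.smul_apply, smul_eq_mul]; ring

lemma foot_foot (p r : Fin 3 → K) : Bf (foot p r) (foot r p) = -Bf p r * gram p r := by
  simp [Bf, foot, gram]; ring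

/-- Expansion of a vector in terms of `p`, `r` and the pole of the line joining them. -/
lemma expand (p r v : Fin 3 → K) : (2 * gram p r) • v =
    (2 * (Bf r r * Bf v p - Bf p r * Bf v r)) • p +
      (2 * (Bf p p * Bf v r - Bf p r * Bf v p)) • r - Bf v (pole p r) • pole p r := by
  ext i
  fin_cases i <;> simp [Bf, pole, gram] <;> ring

lemma expand_left {p r v : Fin 3 → K} (h : Bf v p = 0) : (2 * gram p r) • v =
    (2 * Bf v r) • foot p r - Bf v (pole p r) • pole p r := by
  rw [expand, h]
  ext i
  simp only [foot, Pi.add_apply, Pi.sub_apply, Pi.smul_apply, smul_eq_mul]; ring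

lemma expand_right {p r v : Fin 3 → K} (h : Bf v r = 0) : (2 * gram p r) • v =
    (2 * Bf v p) • foot r p - Bf v (pole p r) • pole p r := by
  rw [expand, h]
  ext i
  simp only [foot, Pi.add_apply, Pi.sub_apply, Pi.smul_apply, smul_eq_mul, Bf_comm r p]; ring

/-- The line joining two distinct internal points is not tangent to the conic. -/
lemma gram_ne_zero (h2 : (2 : K) ≠ 0) {p r : Ipts K} (hpr : p ≠ r) :
    gram p.1.rep r.1.rep ≠ 0 := by
  intro h
  have h0 : foot p.1.rep r.1.rep = 0 :=
    anisotropic p.2 (foot_perp _ _) (by rw [Qf_foot h2, h, mul_zero])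
  have hp : Bf p.1.rep p.1.rep ≠ 0 := not_perp_self h2 p
  refine hpr (Ipts_ext (a := (Bf p.1.rep p.1.rep)⁻¹ * Bf p.1.rep r.1.rep) ?_).symm
  rw [mul_smul, ← sub_eq_zero.1 h0, smul_smul, inv_mul_cancel₀ hp, one_smul]

/-- The feet of the two perpendiculars are internal together. -/
lemma nonsq_foot (h2 : (2 : K) ≠ 0) {p r : Ipts K}
    (h : Nonsq K (Qf K (foot p.1.rep r.1.rep))) : Nonsq K (Qf K (foot r.1.rep p.1.rep)) := by
  have hp : Nonsq K (Qf K p.1.rep) := p.2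
  have hr : Nonsq K (Qf K r.1.rep) := r.2
  rw [Qf_foot h2] at h ⊢
  rw [gram_comm r.1.rep]
  generalize gram p.1.rep r.1.rep = D at *
  unfold Nonsq at *
  -- In a finite field the product of two nonsquares is a square.
  have key : ∀ a b : K, ¬ IsSquare a → ¬ IsSquare b → IsSquare (a * b) := fun a b ha hb => by
    rw [← quadraticChar_neg_one_iff_not_isSquare] at ha hb
    by_contra hab
    rw [← quadraticChar_neg_one_iff_not_isSquare, map_mul, ha, hb] at hab
    norm_num at hab
  have hD : IsSquare D := by
    by_contra hD
    exact h (key _ _ hp hD)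
  obtain ⟨x, rfl⟩ := hD
  have hx : x ≠ 0 := by rintro rfl; exact h (by simp)
  rintro ⟨y, hy⟩
  exact hr ⟨y / x, by field_simp; linear_combination hy⟩

/-! ### Parity of the number of walks -/

lemma one_add_one_F2bar : (1 : F2bar) + 1 = 0 := CharTwo.add_self_eq_zero 1

/-- Modulo two, a finite set stable under an involution may be counted by its fixed points. -/
lemma card_eq_card_fixed {α : Type} [DecidableEq α] (W : Finset α) (g : α → α)
    (hg : ∀ a ∈ W, g a ∈ W) (hgg : ∀ a ∈ W, g (g a) = a) :
    (W.card : F2bar) = ((W.filter fun a => g a = a).card : F2bar) := by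
  have h := Finset.card_filter_add_card_filter_not (s := W) (fun a => g a = a)
  rw [← h, Nat.cast_add]
  have h0 : ((W.filter fun a => ¬ g a = a).card : F2bar) = 0 := by
    rw [Finset.cast_card]
    refine Finset.sum_involution (fun a _ => g a) (fun _ _ => one_add_one_F2bar) ?_ ?_ ?_
    · intro a ha _
      exact (Finset.mem_filter.1 ha).2
    · intro a ha
      obtain ⟨h1, h3⟩ := Finset.mem_filter.1 ha
      refine Finset.mem_filter.2 ⟨hg a h1, fun h => h3 ?_⟩
      rw [hgg a h1] at h
      exact h.symm
    · intro a ha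
      exact hgg a (Finset.mem_filter.1 ha).1
  rw [h0, add_zero]

/-- The pairs `(s, t)` of internal points with `p ⊥ s ⊥ t ⊥ r`. -/
def walks (p r : Ipts K) : Finset (Ipts K × Ipts K) :=
  Finset.univ.filter fun x => Perp p x.1 ∧ Perp x.1 x.2 ∧ Perp x.2 r

lemma mem_walks {p r : Ipts K} {x : Ipts K × Ipts K} :
    x ∈ walks p r ↔ Perp p x.1 ∧ Perp x.1 x.2 ∧ Perp x.2 r := by
  simp [walks]

lemma card_walks_self (h2 : (2 : K) ≠ 0) (p : Ipts K) : ((walks p p).card : F2bar) = 0 := by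
  rw [card_eq_card_fixed (walks p p) Prod.swap ?_ fun _ _ => Prod.swap_swap _]
  · rw [Finset.filter_eq_empty_iff.2, Finset.card_empty, Nat.cast_zero]
    rintro ⟨s, t⟩ hx h
    have e : t = s := congrArg Prod.fst h
    subst e
    exact not_perp_self h2 _ (mem_walks.1 hx).2.1
  · rintro ⟨s, t⟩ hx
    obtain ⟨h1, h3, h4⟩ := mem_walks.1 hx
    exact mem_walks.2 ⟨perp_comm.1 h4, perp_comm.1 h3, perp_comm.1 h1⟩

section
variable (h2 : (2 : K) ≠ 0) {p r : Ipts K}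
  (hc : Bf (pole p.1.rep r.1.rep) (pole p.1.rep r.1.rep) ≠ 0)

/-- The fixed points of the reflection on `p^⊥`. -/
lemma fixed_left (s : Ipts K) : (Perp p s ∧ reflI h2 hc s = s) ↔
    (∃ a : K, s.1.rep = a • pole p.1.rep r.1.rep) ∨
      ∃ a : K, s.1.rep = a • foot p.1.rep r.1.rep := by
  constructor
  · rintro ⟨h1, h3⟩
    rcases reflI_fixed h2 hc h3 with h | h
    · right
      have hD : 2 * gram p.1.rep r.1.rep ≠ 0 := by
        rw [pole_self] at hc
        intro h; exact hc (by linear_combination -h)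
      have e := expand_left (r := r.1.rep) ((Bf_comm _ _).trans h1)
      rw [h, zero_smul, sub_zero] at e
      refine ⟨(2 * gram p.1.rep r.1.rep)⁻¹ * (2 * Bf s.1.rep r.1.rep), ?_⟩
      rw [mul_smul, ← e, smul_smul, inv_mul_cancel₀ hD, one_smul]
    · exact Or.inl h
  · rintro (⟨a, h⟩ | ⟨a, h⟩)
    · refine ⟨?_, reflI_eq_of_center h2 hc h⟩
      unfold Perp
      rw [h, Bf_smul_right, pole_perp_left, mul_zero]
    · refine ⟨?_, reflI_eq_of_perp h2 hc ?_⟩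
      · unfold Perp
        rw [h, Bf_smul_right, foot_perp, mul_zero]
      · rw [h, Bf_smul_left, foot_perp_pole, mul_zero]

/-- The fixed points of the reflection on `r^⊥`. -/
lemma fixed_right (s : Ipts K) : (Perp s r ∧ reflI h2 hc s = s) ↔
    (∃ a : K, s.1.rep = a • pole p.1.rep r.1.rep) ∨
      ∃ a : K, s.1.rep = a • foot r.1.rep p.1.rep := by
  constructor
  · rintro ⟨h1, h3⟩
    rcases reflI_fixed h2 hc h3 with h | h
    · right
      have hD : 2 * gram p.1.rep r.1.rep ≠ 0 := by
        rw [pole_self] at hc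
        intro h; exact hc (by linear_combination -h)
      have e := expand_right (p := p.1.rep) h1
      rw [h, zero_smul, sub_zero] at e
      refine ⟨(2 * gram p.1.rep r.1.rep)⁻¹ * (2 * Bf s.1.rep p.1.rep), ?_⟩
      rw [mul_smul, ← e, smul_smul, inv_mul_cancel₀ hD, one_smul]
    · exact Or.inl h
  · rintro (⟨a, h⟩ | ⟨a, h⟩)
    · refine ⟨?_, reflI_eq_of_center h2 hc h⟩
      unfold Perp
      rw [h, Bf_smul_left, Bf_comm, pole_perp_right, mul_zero]
    · refine ⟨?_, reflI_eq_of_perp h2 hc ?_⟩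
      · unfold Perp
        rw [h, Bf_smul_left, Bf_comm, foot_perp, mul_zero]
      · rw [h, Bf_smul_left, foot_perp_pole', mul_zero]

lemma reflI_perp (s t : Ipts K) : Perp (reflI h2 hc s) (reflI h2 hc t) ↔ Perp s t :=
  simI_perp h2 _ _ s t

/-- The walks from `p` to `r` may be counted, modulo two, by those fixed by the reflection. -/
lemma card_walks_fixed : ((walks p r).card : F2bar) =
    (((walks p r).filter fun x => reflI h2 hc x.1 = x.1 ∧ reflI h2 hc x.2 = x.2).card : F2bar) := by
  have hp : reflI h2 hc p = p := reflI_eq_of_perp h2 hc (pole_perp_left _ _)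
  have hr : reflI h2 hc r = r := reflI_eq_of_perp h2 hc (pole_perp_right _ _)
  rw [card_eq_card_fixed (walks p r) (fun x => (reflI h2 hc x.1, reflI h2 hc x.2))]
  · simp only [Prod.ext_iff]
  · intro x hx
    obtain ⟨h1, h3, h4⟩ := mem_walks.1 hx
    refine mem_walks.2 ⟨?_, (reflI_perp h2 hc _ _).2 h3, ?_⟩
    · have := (reflI_perp h2 hc _ _).2 h1
      rwa [hp] at this
    · have := (reflI_perp h2 hc _ _).2 h4
      rwa [hr] at this
  · intro x _
    exact Prod.ext (reflI_reflI h2 hc _) (reflI_reflI h2 hc _)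

end


lemma exists_rep_iff {v : Fin 3 → K} (h : Nonsq K (Qf K v)) (s : Ipts K) :
    (∃ a : K, s.1.rep = a • v) ↔ s = toI v h := by
  constructor
  · rintro ⟨a, e⟩
    exact eq_toI h e
  · rintro rfl
    obtain ⟨a, -, e⟩ := rep_toI v h
    exact ⟨a, e⟩

lemma not_exists_rep {v : Fin 3 → K} (h : ¬ Nonsq K (Qf K v)) (s : Ipts K) :
    (∃ a : K, s.1.rep = a • v) ↔ False :=
  iff_false_intro fun ⟨_, e⟩ => h (nonsq_of_rep e)

lemma perp_toI_toI {v w : Fin 3 → K} (hv : Nonsq K (Qf K v)) (hw : Nonsq K (Qf K w)) :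
    Perp (toI v hv) (toI w hw) ↔ Bf v w = 0 := by
  rw [perp_toI, Bf_comm]
  obtain ⟨a, ha, e⟩ := rep_toI v hv
  rw [e, Bf_smul_right, Bf_comm]; simp [ha]

/-- The entry `(A ^ 3) p r` agrees with `A p r` modulo two: of the walks fixed by the reflection in
the pole of `pr`, the two through the pole cancel, and the remaining one joins the two feet. -/
lemma card_walks (h2 : (2 : K) ≠ 0) (p r : Ipts K) :
    ((walks p r).card : F2bar) = if Perp p r then 1 else 0 := by
  by_cases hpr : p = r
  · subst hpr
    rw [card_walks_self h2, if_neg (not_perp_self h2 p)]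
  have hg := gram_ne_zero h2 hpr
  have hc : Bf (pole p.1.rep r.1.rep) (pole p.1.rep r.1.rep) ≠ 0 := by
    rw [pole_self]; exact mul_ne_zero (neg_ne_zero.2 h2) hg
  rw [card_walks_fixed h2 hc]
  set F := (walks p r).filter fun x => reflI h2 hc x.1 = x.1 ∧ reflI h2 hc x.2 = x.2 with hF
  have memF : ∀ x : Ipts K × Ipts K, x ∈ F ↔ ((∃ a : K, x.1.1.rep = a • pole p.1.rep r.1.rep) ∨
      ∃ a : K, x.1.1.rep = a • foot p.1.rep r.1.rep) ∧
      ((∃ a : K, x.2.1.rep = a • pole p.1.rep r.1.rep) ∨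
      ∃ a : K, x.2.1.rep = a • foot r.1.rep p.1.rep) ∧ Perp x.1 x.2 := by
    intro x
    rw [← fixed_left h2 hc, ← fixed_right h2 hc, hF, Finset.mem_filter, mem_walks]
    tauto
  have irr := not_perp_self (K := K) h2
  by_cases hD : Nonsq K (Qf K (foot p.1.rep r.1.rep))
  · have hD' := nonsq_foot h2 hD
    have hDD : Perp (toI _ hD) (toI _ hD') ↔ Perp p r := by
      rw [perp_toI_toI, foot_foot]
      simp [hg, Perp]
    by_cases hC : Nonsq K (Qf K (pole p.1.rep r.1.rep))
    · have h1 : Perp (toI _ hC) (toI _ hD') := by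
        rw [perp_toI_toI, Bf_comm, foot_perp_pole']
      have h3 : Perp (toI _ hD) (toI _ hC) := by
        rw [perp_toI_toI, foot_perp_pole]
      simp only [exists_rep_iff hC, exists_rep_iff hD, exists_rep_iff hD'] at memF
      generalize toI _ hC = C at *
      generalize toI _ hD = D at *
      generalize toI _ hD' = D' at *
      have n1 : D ≠ C := by rintro rfl; exact irr _ h3
      have n2 : C ≠ D' := by rintro rfl; exact irr _ h1
      by_cases hb : Perp p r
      · have e : F = {(C, D'), (D, C), (D, D')} := by
          ext ⟨s, t⟩
          simp only [memF, Finset.mem_insert, Finset.mem_singleton, Prod.mk.injEq]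
          have := irr C
          have := hDD.2 hb
          grind
        have e3 : F.card = 3 := by
          rw [e, Finset.card_eq_three]
          exact ⟨_, _, _, by simp [n1.symm], by simp [n1.symm], by simp [n2], rfl⟩
        rw [e3, if_pos hb]
        have := one_add_one_F2bar
        push_cast
        linear_combination this
      · have e : F = {(C, D'), (D, C)} := by
          ext ⟨s, t⟩
          simp only [memF, Finset.mem_insert, Finset.mem_singleton, Prod.mk.injEq]
          have := irr C
          have := mt hDD.1 hb
          grind
        rw [e, Finset.card_pair (by simp [n1.symm]), if_neg hb]
        have := one_add_one_F2bar
        push_cast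
        linear_combination this
    · simp only [not_exists_rep hC, exists_rep_iff hD, exists_rep_iff hD', false_or] at memF
      by_cases hb : Perp p r
      · have e : F = {(toI _ hD, toI _ hD')} := by
          ext ⟨s, t⟩
          simp only [memF, Finset.mem_singleton, Prod.mk.injEq]
          have := hDD.2 hb
          grind
        rw [e, Finset.card_singleton, if_pos hb, Nat.cast_one]
      · have e : F = ∅ := by
          ext ⟨s, t⟩
          simp only [memF, Finset.notMem_empty]
          have := mt hDD.1 hb
          grind
        rw [e, Finset.card_empty, if_neg hb, Nat.cast_zero]
  · have hD' : ¬ Nonsq K (Qf K (foot r.1.rep p.1.rep)) := fun h => hD (nonsq_foot h2 h)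
    have hb : ¬ Perp p r := by
      intro hb
      -- If `p ⊥ r`, the foot on `p^⊥` is a multiple of `r`.
      apply hD
      refine nonsq_of_rep (s := r) (a := (Bf p.1.rep p.1.rep)⁻¹) ?_
      have hp : Bf p.1.rep p.1.rep ≠ 0 := irr p
      have hb' : Bf p.1.rep r.1.rep = 0 := hb
      rw [foot, hb', zero_smul, sub_zero, smul_smul, inv_mul_cancel₀ hp, one_smul]
    have e : F = ∅ := by
      ext ⟨s, t⟩
      simp only [memF, not_exists_rep hD, not_exists_rep hD', or_false, Finset.notMem_empty,
        iff_false]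
      rintro ⟨⟨a, ha⟩, ⟨b, hb⟩, h⟩
      have hC := nonsq_of_rep ha
      rw [eq_toI hC ha, eq_toI hC hb] at h
      exact irr _ h
    rw [e, Finset.card_empty, if_neg hb, Nat.cast_zero]

/-! ### The incidence matrix and the group action -/

lemma AmatF_apply (p r : Ipts K) : AmatF K p r = if Perp p r then 1 else 0 := by
  simp only [AmatF, Matrix.of_apply, onPerp_iff]

lemma AmatF_cube (h2 : (2 : K) ≠ 0) : AmatF K * (AmatF K * AmatF K) = AmatF K := by
  ext p r
  rw [AmatF_apply, ← card_walks h2 p r, walks, Finset.cast_card, Finset.sum_filter,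
    ← Finset.univ_product_univ, Finset.sum_product, Matrix.mul_apply]
  refine Finset.sum_congr rfl fun s _ => ?_
  rw [Matrix.mul_apply, Finset.mul_sum]
  refine Finset.sum_congr rfl fun t _ => ?_
  simp only [AmatF_apply]
  by_cases h1 : Perp p s <;> by_cases h3 : Perp s t <;> by_cases h4 : Perp t r <;>
    simp [h1, h3, h4]

lemma Hset_isSim {M : Matrix (Fin 3) (Fin 3) K} (hM : M ∈ Hset K) :
    IsSim (Matrix.vecMulLinear M) := by
  obtain ⟨a, b, c, d, h, rfl⟩ := hM
  refine ⟨1, one_ne_zero, fun v w => ?_⟩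
  have e : ∀ v w : Fin 3 → K, Bf (Matrix.vecMul v
      !![a^2, a*b, b^2; 2*a*c, a*d + b*c, 2*b*d; c^2, c*d, d^2]) (Matrix.vecMul w
      !![a^2, a*b, b^2; 2*a*c, a*d + b*c, 2*b*d; c^2, c*d, d^2]) =
      (a * d - b * c) ^ 2 * Bf v w := fun v w => by
    simp [Bf, Matrix.vecMul, dotProduct, Fin.sum_univ_three]
    ring
  rw [Matrix.vecMulLinear_apply, Matrix.vecMulLinear_apply, e, h]

lemma actPt_eq (h2 : (2 : K) ≠ 0) {M : Matrix (Fin 3) (Fin 3) K} (hM : M ∈ Hset K)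
    (p : Ipts K) : actPt K M p.1 = (simI h2 _ (Hset_isSim hM) p).1 :=
  dif_pos (ne_zero_of_Qf ((Hset_isSim hM).nonsq h2 p.2).ne_zero)

/-- `φ` is `H`-equivariant. -/
lemma actMat_comm (h2 : (2 : K) ≠ 0) {M : Matrix (Fin 3) (Fin 3) K} (hM : M ∈ Hset K) :
    actMat K M * AmatF K = AmatF K * actMat K M := by
  set g := simI h2 _ (Hset_isSim hM) with hg
  have hact : ∀ p r, actMat K M p r = if g p = r then 1 else 0 := fun p r => by
    simp only [actMat, Matrix.of_apply, actPt_eq h2 hM, Subtype.ext_iff, hg]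
  have hinj : Function.Injective g := simI_injective h2 _ _
  have hsurj : Function.Surjective g := Finite.injective_iff_surjective.1 hinj
  ext p r
  obtain ⟨u, rfl⟩ := hsurj r
  rw [Matrix.mul_apply, Matrix.mul_apply]
  simp only [hact, hinj.eq_iff, ite_mul, one_mul, zero_mul, mul_ite, mul_one, mul_zero,
    Finset.sum_ite_eq, Finset.sum_ite_eq', Finset.mem_univ, if_true]
  simp only [AmatF_apply, hg, simI_perp]

lemma phi_cube (h2 : (2 : K) ≠ 0) (x : Ipts K → F2bar) :
    phi K (phi K (phi K x)) = phi K x := by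
  simp only [phi, Matrix.vecMulLinear_apply, Matrix.vecMul_vecMul, Matrix.mul_assoc,
    AmatF_cube h2]

lemma actF_phi (h2 : (2 : K) ≠ 0) {M : Matrix (Fin 3) (Fin 3) K} (hM : M ∈ Hset K)
    (x : Ipts K → F2bar) : actF K M (phi K x) = phi K (actF K M x) := by
  simp only [phi, actF, Matrix.vecMulLinear_apply, Matrix.vecMul_vecMul, actMat_comm h2 hM]

end

/-- As `F[H]`-modules, `F^I = Im(φ) ⊕ Ker(φ)`: both are `H`-stable and they
are complementary subspaces. -/
theorem range_ker_compl (hq : Odd (Fintype.card K)) :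
    (∀ M ∈ Hset K, ∀ x ∈ LinearMap.range (phi K), actF K M x ∈ LinearMap.range (phi K)) ∧
    (∀ M ∈ Hset K, ∀ x ∈ LinearMap.ker (phi K), actF K M x ∈ LinearMap.ker (phi K)) ∧
    IsCompl (LinearMap.range (phi K)) (LinearMap.ker (phi K)) := by
  have h2 : (2 : K) ≠ 0 := by
    refine Ring.two_ne_zero fun h => ?_
    have := FiniteField.even_card_of_char_two h
    rw [Nat.odd_iff] at hq
    omega
  refine ⟨?_, ?_, ?_⟩
  · rintro M hM _ ⟨y, rfl⟩
    exact ⟨actF K M y, (actF_phi h2 hM y).symm⟩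
  · intro M hM x hx
    rw [LinearMap.mem_ker] at hx ⊢
    rw [← actF_phi h2 hM, hx, map_zero]
  · refine ⟨Submodule.disjoint_def.2 ?_, codisjoint_iff.2 (eq_top_iff.2 fun x _ => ?_)⟩
    · rintro _ ⟨y, rfl⟩ hy
      rw [LinearMap.mem_ker] at hy
      rw [← phi_cube h2, hy, map_zero]
    · -- `φ ^ 2` is the projection onto the range along the kernel.
      rw [← add_sub_cancel (phi K (phi K x)) x]
      refine Submodule.add_mem_sup ⟨_, rfl⟩ ?_
      rw [LinearMap.mem_ker, map_sub, phi_cube h2, sub_self]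

end ConicPaper
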